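/- arXiv:2404.19603 — 3 statements merged into one kernel-verified Lean document; each statement's English description precedes it below -/
import Mathlib

section
/- Let A be a commutative ring, M a finite projective A-module, N an A-module, and (N_i)_{i ∈ I} an arbitrary (possibly infinite) family of A-submodules of N. For any submodule N' ⊆ N the induced map M ⊗_A N' → M ⊗_A N is injective, so M ⊗_A N' may be identified with its image in M ⊗_A N. With this identification, M ⊗_A (⋂_{i ∈ I} N_i) = ⋂_{i ∈ I} (M ⊗_A N_i) as submodules of M ⊗_A N. -/
open scoped TensorProduct

/-!
Let A be a commutative ring, M a finite projective A-module, N an A-module, and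
(N_i)_{i ∈ I} an arbitrary family of A-submodules of N.  For any submodule
N' ⊆ N the induced map M ⊗ N' → M ⊗ N is injective, and, identifying M ⊗ N'
with its image in M ⊗ N, one has M ⊗ (⋂ᵢ N_i) = ⋂ᵢ (M ⊗ N_i) inside M ⊗ N.
-/

theorem finite_projective_tensor_intersection_of_family
    {A M N : Type*} {ι : Type*} [CommRing A]
    [AddCommGroup M] [Module A M] [Module.Finite A M] [Module.Projective A M]
    [AddCommGroup N] [Module A N] (Ns : ι → Submodule A N) :
    (∀ N' : Submodule A N,
      Function.Injective (LinearMap.lTensor M N'.subtype)) ∧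
    LinearMap.range (LinearMap.lTensor M (⨅ i, Ns i).subtype) =
      ⨅ i, LinearMap.range (LinearMap.lTensor M (Ns i).subtype) := by
  refine ⟨fun N' => Module.Flat.lTensor_preserves_injective_linearMap _
    N'.injective_subtype, le_antisymm ?_ ?_⟩
  · refine le_iInf fun i => ?_
    rintro _ ⟨y, rfl⟩
    refine ⟨LinearMap.lTensor M (Submodule.inclusion (iInf_le Ns i)) y, ?_⟩
    rw [← LinearMap.comp_apply, ← LinearMap.lTensor_comp, Submodule.subtype_comp_inclusion]
  · obtain ⟨n, f, g, -, -, hfg⟩ := Module.Finite.exists_comp_eq_id_of_projective A M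
    let φ : Fin n → (TensorProduct A M N →ₗ[A] N) := fun k =>
      (TensorProduct.lid A N).toLinearMap ∘ₗ
        LinearMap.rTensor N (LinearMap.proj k ∘ₗ g)
    have hφ : ∀ k m v, φ k (m ⊗ₜ[A] v) = g m k • v := by
      intro k m v
      simp [φ]
    have key : ∀ x, ∑ k, f (Pi.single k 1) ⊗ₜ[A] φ k x = x := by
      intro x
      induction x with
      | zero => simp
      | add x y hx hy =>
        simp only [map_add, TensorProduct.tmul_add, Finset.sum_add_distrib, hx, hy]
      | tmul m v =>
        simp only [hφ, ← TensorProduct.smul_tmul, ← TensorProduct.sum_tmul, ← map_smul, ← map_sum]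
        congr 1
        have h : ∑ k, g m k • (Pi.single k 1 : Fin n → A) = g m :=
          (pi_eq_sum_univ' (g m)).symm
        rw [h]
        exact LinearMap.congr_fun hfg m
    have mem : ∀ (N' : Submodule A N) (y : TensorProduct A M N') k,
        φ k (LinearMap.lTensor M N'.subtype y) ∈ N' := by
      intro N' y k
      induction y with
      | zero => simp
      | add x y hx hy => simpa only [map_add] using N'.add_mem hx hy
      | tmul m v =>
        rw [LinearMap.lTensor_tmul, hφ]
        exact N'.smul_mem _ v.2
    intro x hx
    have hx' : ∀ k, φ k x ∈ ⨅ i, Ns i := by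
      intro k
      rw [Submodule.mem_iInf] at hx ⊢
      intro i
      obtain ⟨y, rfl⟩ := hx i
      exact mem _ y k
    rw [← key x]
    exact Submodule.sum_mem _ fun k _ => ⟨f (Pi.single k 1) ⊗ₜ[A] ⟨φ k x, hx' k⟩, by simp⟩
end

section
/- Let p be a prime number and let A → B be a homomorphism of commutative rings which are both classically p-adically complete, with A p-torsion-free. Let M be a finitely generated, classically p-adically complete A-module such that M[1/p] := M ⊗_A A[1/p] is a finite projective A[1/p]-module. Then the natural map M[1/p] ⊗_A B → (M ⊗̂_A B)[1/p] is bijective, where M ⊗̂_A B denotes the p-adic completion lim_n (M ⊗_A B)/p^n(M ⊗_A B). In particular, (M ⊗̂_A B)[1/p] is a finite projective B[1/p]-module. -/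
open TensorProduct

lemma uniform_pow {R X Y : Type*} [CommRing R] [AddCommGroup X] [AddCommGroup Y] [Module R X]
    [Module R Y] [hX : Module.Finite R X] (p : R) (f : X →ₗ[R] Y) (W : Submodule R Y)
    (h : ∀ x, ∃ j : ℕ, p ^ j • f x ∈ W) : ∃ j : ℕ, ∀ x, p ^ j • f x ∈ W := by
  have key : ∀ N : Submodule R X, N.FG → ∃ j : ℕ, ∀ x ∈ N, p ^ j • f x ∈ W := by
    intro N hN
    induction N, hN using Submodule.fg_induction with
    | singleton x =>
      obtain ⟨j, hj⟩ := h x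
      refine ⟨j, fun y hy => ?_⟩
      obtain ⟨a, rfl⟩ := Submodule.mem_span_singleton.1 hy
      rw [map_smul, smul_comm]
      exact W.smul_mem _ hj
    | sup N₁ N₂ _ _ h₁ h₂ =>
      obtain ⟨j₁, h₁⟩ := h₁
      obtain ⟨j₂, h₂⟩ := h₂
      refine ⟨j₁ + j₂, fun y hy => ?_⟩
      obtain ⟨a, ha, b, hb, rfl⟩ := Submodule.mem_sup.1 hy
      rw [map_add, smul_add]
      refine W.add_mem ?_ ?_
      · rw [pow_add, mul_comm, mul_smul]; exact W.smul_mem _ (h₁ a ha)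
      · rw [pow_add, mul_smul]; exact W.smul_mem _ (h₂ b hb)
  obtain ⟨j, hj⟩ := key ⊤ hX.fg_top
  exact ⟨j, fun x => hj x trivial⟩

lemma exists_retract {A M : Type*} [CommRing A] [AddCommGroup M] [Module A M] (p : A)
    (hAtf : p ∈ nonZeroDivisors A) [Module.Finite A M]
    [Module.Projective (Localization (Submonoid.powers p))
      (LocalizedModule (Submonoid.powers p) M)] :
    ∃ (n k : ℕ) (π : (Fin n → A) →ₗ[A] M) (σ : M →ₗ[A] (Fin n → A)),
      ∀ m, π (σ m) = p ^ k • m := by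
  obtain ⟨n, π, hπ⟩ := Module.Finite.exists_fin' A M
  set S := Submonoid.powers p
  have hsurj : Function.Surjective (LocalizedModule.map S π) := by
    exact LocalizedModule.map_surjective S π hπ
  obtain ⟨s, hs⟩ := Module.projective_lifting_property (LocalizedModule.map S π)
    LinearMap.id hsurj
  let mkF := LocalizedModule.mkLinearMap S (Fin n → A)
  have hinj : Function.Injective mkF := by
    rw [← LinearMap.ker_eq_bot, LinearMap.ker_eq_bot']
    intro x hx
    obtain ⟨⟨c, hc⟩, hcx⟩ := (IsLocalizedModule.eq_zero_iff S mkF).1 hx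
    obtain ⟨j, rfl⟩ := hc
    funext i
    have := congrFun hcx i
    have h2 : p ^ j * x i = 0 := this
    exact (mul_left_mem_nonZeroDivisors_eq_zero_iff (pow_mem hAtf j)).1 h2
  let f : M →ₗ[A] LocalizedModule S (Fin n → A) :=
    (s.restrictScalars A) ∘ₗ LocalizedModule.mkLinearMap S M
  obtain ⟨k, hk⟩ := uniform_pow p f (LinearMap.range mkF) (by
    intro x
    obtain ⟨⟨y, ⟨c, j, rfl⟩⟩, hy⟩ := IsLocalizedModule.surj S mkF (f x)
    exact ⟨j, y, hy.symm⟩)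
  let e := LinearEquiv.ofInjective mkF hinj
  let σ : M →ₗ[A] (Fin n → A) := e.symm.toLinearMap ∘ₗ
    LinearMap.codRestrict (LinearMap.range mkF) (p ^ k • f) hk
  have hσ : ∀ m, mkF (σ m) = p ^ k • f m := by
    intro m
    have := e.apply_symm_apply (LinearMap.codRestrict (LinearMap.range mkF) (p ^ k • f) hk m)
    exact congrArg Subtype.val this
  obtain ⟨j, hj⟩ := uniform_pow p (π ∘ₗ σ - p ^ k • LinearMap.id) ⊥ (by
    intro m
    have h0 : LocalizedModule.mkLinearMap S M ((π ∘ₗ σ - p ^ k • LinearMap.id : M →ₗ[A] M) m) = 0 := by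
      have h1 : LocalizedModule.mkLinearMap S M (π (σ m)) = LocalizedModule.map S π (mkF (σ m)) := by
        simp [mkF]
      have h2 : LocalizedModule.map S π (f m) = LocalizedModule.mkLinearMap S M m :=
        LinearMap.congr_fun hs (LocalizedModule.mkLinearMap S M m)
      have h3 : LocalizedModule.map S π (p ^ k • f m) = p ^ k • LocalizedModule.map S π (f m) :=
        ((LocalizedModule.map S π).restrictScalars A).map_smul _ _
      rw [LinearMap.sub_apply, map_sub, LinearMap.comp_apply, h1, hσ, h3, h2,
        LinearMap.smul_apply, map_smul, LinearMap.id_apply, sub_self]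
    obtain ⟨⟨c, i, rfl⟩, hc⟩ := (IsLocalizedModule.eq_zero_iff S _).1 h0
    exact ⟨i, hc⟩)
  refine ⟨n, j + k, π, p ^ j • σ, fun m => ?_⟩
  have := hj m
  rw [Submodule.mem_bot, LinearMap.sub_apply, smul_sub, sub_eq_zero] at this
  rw [LinearMap.smul_apply, map_smul, pow_add, mul_smul]
  exact this

lemma of_pi_bijective {B : Type*} [CommRing B] (I : Ideal B) [IsAdicComplete I B] (n : ℕ) :
    Function.Bijective (AdicCompletion.of I (Fin n → B)) := by
  have h : Function.Bijective (fun x : Fin n → B => 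
      AdicCompletion.piEquivOfFintype I (fun _ : Fin n => B) (AdicCompletion.of I (Fin n → B) x)) := by
    have : (fun x : Fin n → B => 
      AdicCompletion.piEquivOfFintype I (fun _ : Fin n => B) (AdicCompletion.of I (Fin n → B) x))
      = fun x j => AdicCompletion.of I B (x j) := by
      funext x j
      rw [AdicCompletion.piEquivOfFintype_apply]
      rfl
    rw [this]
    exact Function.Bijective.piMap (fun _ => AdicCompletion.of_bijective I B)
  exact (Function.Bijective.of_comp_iff' (AdicCompletion.piEquivOfFintype I (fun _ : Fin n => B)).bijective _).1 h

lemma completion_retract {B N : Type*} [CommRing B] [AddCommGroup N] [Module B N] (I : Ideal B)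
    [IsAdicComplete I B] (n : ℕ) (c : B) (π : (Fin n → B) →ₗ[B] N) (σ : N →ₗ[B] (Fin n → B))
    (h : ∀ m, π (σ m) = c • m) :
    ∃ τ : AdicCompletion I N →ₗ[B] (Fin n → B),
      (∀ y, AdicCompletion.of I N (π (τ y)) = c • y) ∧ ∀ x, τ (AdicCompletion.of I N x) = σ x := by
  let e := LinearEquiv.ofBijective _ (of_pi_bijective I n)
  have he : ∀ x, e x = AdicCompletion.of I _ x := fun x => rfl
  refine ⟨e.symm.toLinearMap ∘ₗ (AdicCompletion.map I σ).restrictScalars B, fun y => ?_, fun x => ?_⟩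
  · rw [← AdicCompletion.map_of, ← he]
    simp only [LinearMap.comp_apply, LinearEquiv.coe_coe, LinearEquiv.apply_symm_apply]
    have : π ∘ₗ σ = c • LinearMap.id := LinearMap.ext h
    change AdicCompletion.map I π (AdicCompletion.map I σ y) = _
    rw [AdicCompletion.map_comp_apply, this]
    induction y using AdicCompletion.induction_on with
    | _ a => 
      rw [AdicCompletion.map_mk]
      rfl
  · simp only [LinearMap.comp_apply, LinearEquiv.coe_coe, LinearMap.restrictScalars_apply,
      AdicCompletion.map_of]
    rw [← he, LinearEquiv.symm_apply_apply]

lemma fin_proj {B Y : Type*} [CommRing B] [AddCommGroup Y] [Module B Y] (p : B)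
    (n k : ℕ) (π : (Fin n → B) →ₗ[B] Y) (σ : Y →ₗ[B] (Fin n → B))
    (h : ∀ m, π (σ m) = p ^ k • m) :
    Module.Finite (Localization (Submonoid.powers p)) (LocalizedModule (Submonoid.powers p) Y) ∧
    Module.Projective (Localization (Submonoid.powers p))
      (LocalizedModule (Submonoid.powers p) Y) := by
  set S := Submonoid.powers p
  have hu : IsUnit (algebraMap B (Localization S) (p ^ k)) :=
    IsLocalization.map_units _ (⟨p ^ k, k, rfl⟩ : S)
  obtain ⟨u, hu⟩ := hu
  have hc : (LocalizedModule.map S π) ∘ₗ (((u⁻¹ : (Localization S)ˣ) : Localization S) • LocalizedModule.map S σ)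
      = LinearMap.id := by
    rw [LinearMap.comp_smul]
    ext x
    induction x using LocalizedModule.induction_on with
    | _ m s =>
    simp only [LinearMap.smul_apply, LinearMap.comp_apply, LocalizedModule.map_mk, h,
      LinearMap.id_apply]
    rw [← LocalizedModule.smul'_mk, ← algebraMap_smul (Localization S) (p ^ k), ← hu, smul_smul, Units.inv_mul, one_smul]
  have : Module.Projective (Localization S) (LocalizedModule S (Fin n → B)) :=
    Module.projective_of_isLocalizedModule S (LocalizedModule.mkLinearMap S _)
  have : Module.Finite (Localization S) (LocalizedModule S (Fin n → B)) :=
    Module.Finite.of_isLocalizedModule S (LocalizedModule.mkLinearMap S _)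
  exact ⟨Module.Finite.of_surjective (LocalizedModule.map S π)
    (fun y => ⟨_, LinearMap.congr_fun hc y⟩), Module.Projective.of_split _ _ hc⟩

lemma nsmul_bij {B Y : Type*} [CommRing B] [AddCommGroup Y] [Module B Y] (p : ℕ) (j : ℕ) :
    Function.Bijective (fun y : LocalizedModule (Submonoid.powers (p : B)) Y => p ^ j • y) := by
  have h := (Module.End.isUnit_iff _).1 (IsLocalizedModule.map_units (S := Submonoid.powers (p : B))
    (LocalizedModule.mkLinearMap (Submonoid.powers (p : B)) Y) ⟨(p : B) ^ j, j, rfl⟩)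
  convert h using 2 with y
  simp only [Module.algebraMap_end_apply]
  rw [← Nat.cast_smul_eq_nsmul B, Nat.cast_pow]

theorem baseChange_completion_invert_p_bijective_and_finite_projective
    {A B : Type*} [CommRing A] [CommRing B] [Algebra A B] (p : ℕ) (hp : p.Prime)
    (hAcomp : IsAdicComplete (Ideal.span {(p : A)}) A)
    (hBcomp : IsAdicComplete (Ideal.span {(p : B)}) B)
    (hAtf : (p : A) ∈ nonZeroDivisors A)
    {M : Type*} [AddCommGroup M] [Module A M]
    (hMfg : Module.Finite A M)
    (hMcomp : IsAdicComplete (Ideal.span {(p : A)}) M)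
    (hMloc_fin : Module.Finite (Localization (Submonoid.powers (p : A)))
      (LocalizedModule (Submonoid.powers (p : A)) M))
    (hMloc_proj : Module.Projective (Localization (Submonoid.powers (p : A)))
      (LocalizedModule (Submonoid.powers (p : A)) M))
    (Φ : (LocalizedModule (Submonoid.powers (p : A)) M ⊗[A] B) →+
      LocalizedModule (Submonoid.powers (p : B))
        (AdicCompletion (Ideal.span {(p : B)}) (B ⊗[A] M)))
    (hΦ : ∀ (m : M) (b : B),
      Φ (LocalizedModule.mkLinearMap (Submonoid.powers (p : A)) M m ⊗ₜ[A] b) =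
        LocalizedModule.mkLinearMap (Submonoid.powers (p : B))
          (AdicCompletion (Ideal.span {(p : B)}) (B ⊗[A] M))
          (AdicCompletion.of (Ideal.span {(p : B)}) (B ⊗[A] M) (b ⊗ₜ[A] m))) :
    Function.Bijective Φ ∧
    Module.Finite (Localization (Submonoid.powers (p : B)))
      (LocalizedModule (Submonoid.powers (p : B))
        (AdicCompletion (Ideal.span {(p : B)}) (B ⊗[A] M))) ∧
    Module.Projective (Localization (Submonoid.powers (p : B)))
      (LocalizedModule (Submonoid.powers (p : B))
        (AdicCompletion (Ideal.span {(p : B)}) (B ⊗[A] M))) := by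
  obtain ⟨n, k, π₀, σ₀, h₀⟩ := exists_retract (M := M) (p : A) hAtf
  let e : B ⊗[A] (Fin n → A) ≃ₗ[B] (Fin n → B) := TensorProduct.piScalarRight A B B (Fin n)
  let π : (Fin n → B) →ₗ[B] B ⊗[A] M := π₀.baseChange B ∘ₗ e.symm.toLinearMap
  let σ : B ⊗[A] M →ₗ[B] (Fin n → B) := e.toLinearMap ∘ₗ σ₀.baseChange B
  have hπσ : ∀ x, π (σ x) = (p : B) ^ k • x := by
    intro x
    simp only [π, σ, LinearMap.comp_apply, LinearEquiv.coe_coe, LinearEquiv.symm_apply_apply]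
    induction x using TensorProduct.induction_on with
    | zero => simp
    | add x y hx hy => simp only [map_add, hx, hy, smul_add]
    | tmul b m =>
      rw [LinearMap.baseChange_tmul, LinearMap.baseChange_tmul, h₀, TensorProduct.tmul_smul,
        ← algebraMap_smul B ((p : A) ^ k), map_pow, map_natCast]
  obtain ⟨τ, hτ, hτ'⟩ := completion_retract (Ideal.span {(p : B)}) n _ π σ hπσ
  refine ⟨?_, fin_proj (p : B) n k (AdicCompletion.of _ _ ∘ₗ π) τ hτ⟩
  let S := Submonoid.powers (p : A)
  let ι : B ⊗[A] M →+ LocalizedModule S M ⊗[A] B :=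
    ((TensorProduct.comm A B (LocalizedModule S M)).toLinearMap ∘ₗ
      (LocalizedModule.mkLinearMap S M).lTensor B).toAddMonoidHom
  have hι : ∀ b m, ι (b ⊗ₜ m) = LocalizedModule.mkLinearMap S M m ⊗ₜ b := fun b m => rfl
  have hΦι : ∀ z, Φ (ι z) = LocalizedModule.mkLinearMap (Submonoid.powers (p : B)) _
      (AdicCompletion.of (Ideal.span {(p : B)}) (B ⊗[A] M) z) := by
    intro z
    induction z using TensorProduct.induction_on with
    | zero => simp only [map_zero]
    | add x y hx hy => simp only [map_add, hx, hy]
    | tmul b m => rw [hι, hΦ]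
  -- every element is a fraction
  have hfrac : ∀ x, ∃ (j : ℕ) (z : B ⊗[A] M), p ^ j • x = ι z := by
    intro x
    induction x using TensorProduct.induction_on with
    | zero => exact ⟨0, 0, by simp⟩
    | add x y hx hy =>
      obtain ⟨j₁, z₁, h₁⟩ := hx
      obtain ⟨j₂, z₂, h₂⟩ := hy
      refine ⟨j₁ + j₂, p ^ j₂ • z₁ + p ^ j₁ • z₂, ?_⟩
      rw [map_add, map_nsmul, map_nsmul, ← h₁, ← h₂, smul_smul, smul_smul, ← pow_add, ← pow_add,
        nsmul_add, add_comm j₂ j₁]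
    | tmul l b =>
      obtain ⟨⟨m, ⟨c, j, rfl⟩⟩, hm⟩ := IsLocalizedModule.surj S (LocalizedModule.mkLinearMap S M) l
      refine ⟨j, b ⊗ₜ m, ?_⟩
      have hm' : ((p : A) ^ j) • l = LocalizedModule.mkLinearMap S M m := hm
      rw [hι, ← hm', ← TensorProduct.smul_tmul', ← Nat.cast_smul_eq_nsmul A, Nat.cast_pow]
  -- division by powers of p in the source
  have hdiv : ∀ (j : ℕ) (x : LocalizedModule S M ⊗[A] B), ∃ x', p ^ j • x' = x := by
    intro j x
    induction x using TensorProduct.induction_on with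
    | zero => exact ⟨0, by simp⟩
    | add x y hx hy =>
      obtain ⟨x', rfl⟩ := hx
      obtain ⟨y', rfl⟩ := hy
      exact ⟨x' + y', nsmul_add _ _ _⟩
    | tmul l b =>
      obtain ⟨l', hl⟩ := ((Module.End.isUnit_iff _).1 (IsLocalizedModule.map_units (S := S)
        (LocalizedModule.mkLinearMap S M) ⟨(p : A) ^ j, j, rfl⟩)).2 l
      have hl' : ((p : A) ^ j) • l' = l := hl
      refine ⟨l' ⊗ₜ b, ?_⟩
      rw [← hl', ← TensorProduct.smul_tmul', ← Nat.cast_smul_eq_nsmul A, Nat.cast_pow]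
  have hinj : ∀ (j : ℕ) (x : LocalizedModule S M ⊗[A] B), p ^ j • x = 0 → x = 0 := by
    intro j x hx
    have hu := IsLocalizedModule.map_units (S := S)
      (LocalizedModule.mkLinearMap S M) ⟨(p : A) ^ j, j, rfl⟩
    obtain ⟨v, hv⟩ := hu.exists_left_inv
    have h1 : (v.rTensor B) (((p : A) ^ j) • x) = x := by
      have h2 : ∀ l, v (((p : A) ^ j) • l) = l := fun l => LinearMap.congr_fun hv l
      clear hx
      induction x using TensorProduct.induction_on with
      | zero => simp
      | add x y hx hy => rw [smul_add, map_add, hx, hy]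
      | tmul l b => rw [TensorProduct.smul_tmul', LinearMap.rTensor_tmul, h2]
    rw [← h1, ← Nat.cast_pow, Nat.cast_smul_eq_nsmul, hx, map_zero]
  constructor
  · rw [injective_iff_map_eq_zero]
    intro x hx
    obtain ⟨j, z, hz⟩ := hfrac x
    have h1 : Φ (ι z) = 0 := by rw [← hz, map_nsmul, hx, nsmul_zero]
    rw [hΦι] at h1
    obtain ⟨⟨c, i, rfl⟩, hc⟩ := (IsLocalizedModule.eq_zero_iff (Submonoid.powers (p : B)) _).1 h1
    have hc' : ((p : B) ^ i) • AdicCompletion.of (Ideal.span {(p : B)}) (B ⊗[A] M) z = 0 := hc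
    have h2 : ((p : B) ^ k) • ((p : B) ^ i • z) = 0 := by
      rw [← hπσ, ← hτ', map_smul, hc', map_zero, map_zero]
    apply hinj (k + i + j)
    have h3 : p ^ (k + i) • z = 0 := by
      rw [← h2, smul_smul, ← pow_add, ← Nat.cast_smul_eq_nsmul B, Nat.cast_pow]
    rw [pow_add, mul_smul, hz, ← map_nsmul, h3, map_zero]
  · intro y
    obtain ⟨⟨w, ⟨c, j, rfl⟩⟩, hw⟩ := IsLocalizedModule.surj (Submonoid.powers (p : B))
      (LocalizedModule.mkLinearMap (Submonoid.powers (p : B)) _) y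
    have hw' : ((p : B) ^ j) • y = LocalizedModule.mkLinearMap (Submonoid.powers (p : B)) _ w := hw
    obtain ⟨x, hx⟩ := hdiv (k + j) (ι (π (τ w)))
    refine ⟨x, (nsmul_bij (B := B) p (k + j)).1 ?_⟩
    change p ^ (k + j) • Φ x = p ^ (k + j) • y
    rw [← map_nsmul, hx, hΦι, hτ, map_smul, ← hw', smul_smul, ← pow_add,
      ← Nat.cast_smul_eq_nsmul B (p ^ (k + j)), Nat.cast_pow]
end

section
/- Let p be a prime number and let A → B be a homomorphism of commutative rings which are both p-torsion-free and classically p-adically complete, and assume that the induced map A/p^nA → B/p^nB is faithfully flat for every n ≥ 1. Let M be a finitely generated, classically p-adically complete A-module, and let M_B denote the p-adic completion of M ⊗_A B. If M_B[1/p] is a finite projective B[1/p]-module, then M[1/p] is a finite projective A[1/p]-module. -/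
open TensorProduct

/-- A ring homomorphism `f : R → S` is *faithfully flat* if it makes `S` a
faithfully flat `R`-module (the `R`-module structure on `S` being restriction
of scalars along `f`). -/
def RingHomFaithfullyFlat {R S : Type*} [CommRing R] [CommRing S] (f : R →+* S) : Prop :=
  letI : Module R S := f.toModule
  Module.FaithfullyFlat R S

theorem aux_mem_pow_smul_top {R X : Type*} [CommRing R] [AddCommGroup X] [Module R X] (p m : ℕ)
    (x : X) : x ∈ ((Ideal.span {(p : R)}) ^ m • ⊤ : Submodule R X) ↔ ∃ y : X, x = p ^ m • y := by
  rw [Ideal.span_singleton_pow, Submodule.ideal_span_singleton_smul,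
    Submodule.mem_smul_pointwise_iff_exists]
  constructor
  · rintro ⟨y, -, rfl⟩
    exact ⟨y, by rw [← Nat.cast_pow, Nat.cast_smul_eq_nsmul]⟩
  · rintro ⟨y, rfl⟩
    exact ⟨y, trivial, by rw [← Nat.cast_pow, Nat.cast_smul_eq_nsmul]⟩

theorem aux_haus {R X : Type*} [CommRing R] [AddCommGroup X] [Module R X] (p : ℕ)
    (h : IsHausdorff (Ideal.span {(p : R)}) X) (x : X) (hx : ∀ m, ∃ y : X, x = p ^ m • y) :
    x = 0 := by
  apply h.haus
  intro m
  rw [SModEq.zero, aux_mem_pow_smul_top]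
  exact hx m

theorem aux_pi_haus {R ι : Type*} [CommRing R] (p : ℕ)
    (h : IsHausdorff (Ideal.span {(p : R)}) R) : IsHausdorff (Ideal.span {(p : R)}) (ι → R) := by
  refine ⟨fun x hx => funext fun i => aux_haus p h _ fun m => ?_⟩
  have := hx m
  rw [SModEq.zero, aux_mem_pow_smul_top] at this
  obtain ⟨y, rfl⟩ := this
  exact ⟨y i, rfl⟩

theorem aux_pi_prec {R ι : Type*} [CommRing R] (p : ℕ)
    (h : IsPrecomplete (Ideal.span {(p : R)}) R) :
    IsPrecomplete (Ideal.span {(p : R)}) (ι → R) := by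
  refine ⟨fun f hf => ?_⟩
  have key : ∀ i, ∃ L : R, ∀ n, f n i ≡ L [SMOD (Ideal.span {(p : R)} ^ n • ⊤ : Submodule R R)] := by
    intro i
    apply h.prec
    intro m n hmn
    have := hf hmn
    rw [SModEq.sub_mem, aux_mem_pow_smul_top] at this ⊢
    obtain ⟨y, hy⟩ := this
    exact ⟨y i, congrFun hy i⟩
  choose L hL using key
  refine ⟨L, fun n => ?_⟩
  rw [SModEq.sub_mem, aux_mem_pow_smul_top]
  have : ∀ i, ∃ y, f n i - L i = p ^ n • y := fun i => by
    have := hL i n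
    rwa [SModEq.sub_mem, aux_mem_pow_smul_top] at this
  choose y hy using this
  exact ⟨y, funext hy⟩

theorem aux_tf {R : Type*} [CommRing R] {ι : Type*} {p : ℕ} (h : (p : R) ∈ nonZeroDivisors R)
    (m : ℕ) {x y : ι → R} (hxy : p ^ m • x = p ^ m • y) : x = y := by
  funext i
  have := congrFun hxy i
  simp only [Pi.smul_apply, nsmul_eq_mul, Nat.cast_pow] at this
  exact (isRegular_iff_mem_nonZeroDivisors.mpr (pow_mem h m)).left this

theorem aux_ff_inj {A B : Type*} [CommRing A] [CommRing B] [Algebra A B] (I : Ideal A) (J : Ideal B)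
    (hIJ : I ≤ J.comap (algebraMap A B))
    (hff : RingHomFaithfullyFlat (Ideal.quotientMap J (algebraMap A B) hIJ))
    {X : Type*} [AddCommGroup X] [Module A X] (hX : Module.IsTorsionBySet A X I) (x : X)
    (hx : (1 : B) ⊗ₜ[A] x = 0) : x = 0 := by
  let _ : Algebra (A ⧸ I) (B ⧸ J) := (Ideal.quotientMap J (algebraMap A B) hIJ).toAlgebra
  have : Module.FaithfullyFlat (A ⧸ I) (B ⧸ J) := hff
  let _ : Module (A ⧸ I) X := hX.module
  have hsm : ∀ (a : A) (x : X), Ideal.Quotient.mk I a • x = a • x := fun a x => rfl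
  let T := (B ⧸ J) ⊗[A ⧸ I] X
  let φ : B →+ X →+ T :=
    { toFun := fun b =>
        { toFun := fun x => (Ideal.Quotient.mk J b) ⊗ₜ[A ⧸ I] x
          map_zero' := by simp
          map_add' := fun x y => by rw [TensorProduct.tmul_add] }
      map_zero' := by ext; simp
      map_add' := fun a b => by ext x; simp [TensorProduct.add_tmul] }
  let ψ : B ⊗[A] X →+ T := TensorProduct.liftAddHom φ (by
    intro a b x
    change (Ideal.Quotient.mk J (a • b)) ⊗ₜ[A ⧸ I] x = (Ideal.Quotient.mk J b) ⊗ₜ[A ⧸ I] (a • x)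
    rw [← hsm, ← TensorProduct.smul_tmul, Algebra.smul_def, Algebra.smul_def, map_mul]
    rfl)
  have h1 : ψ ((1 : B) ⊗ₜ[A] x) = (1 : B ⧸ J) ⊗ₜ[A ⧸ I] x := by
    simp [ψ, φ]
  rw [hx, map_zero] at h1
  apply Module.FaithfullyFlat.tensorProduct_mk_injective (A := A ⧸ I) (B := B ⧸ J) X
  simp [← h1]

/-- the hypothesis of the theorem -/
def CompFF (A B : Type*) [CommRing A] [CommRing B] [Algebra A B] (p : ℕ) : Prop :=
  ∀ n : ℕ, 1 ≤ n → ∀ h : Ideal.span {(p : A) ^ n} ≤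
            (Ideal.span {(p : B) ^ n}).comap (algebraMap A B), RingHomFaithfullyFlat
      (Ideal.quotientMap (Ideal.span {(p : B) ^ n}) (algebraMap A B) h)

theorem aux_descent {A B : Type*} [CommRing A] [CommRing B] [Algebra A B] {p : ℕ}
    (hff : CompFF A B p) {V : Type*} [AddCommGroup V] [Module A V] (W : Submodule A V) (m : ℕ)
    (v : V) (w : B ⊗[A] V) (hw : w ∈ W.baseChange B) (r : B ⊗[A] V)
    (h : (1 : B) ⊗ₜ[A] v = w + p ^ m • r) : ∃ w ∈ W, ∃ y, v = w + p ^ m • y := by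
  rcases Nat.eq_zero_or_pos m with rfl | hm
  · exact ⟨0, W.zero_mem, v, by simp⟩
  have hle : Ideal.span {(p : A) ^ m} ≤
            (Ideal.span {(p : B) ^ m}).comap (algebraMap A B) := by
    rw [Ideal.span_le, Set.singleton_subset_iff, SetLike.mem_coe, Ideal.mem_comap,
            map_pow, map_natCast]
    exact Ideal.mem_span_singleton_self _
  let U : Submodule A V := W ⊔ (Ideal.span {(p : A)} ^ m • ⊤ : Submodule A V)
  have hU : ∀ y : V, p ^ m • y ∈ U := fun y =>
    Submodule.mem_sup_right ((aux_mem_pow_smul_top p m _).2 ⟨y, rfl⟩)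
  have hX : ∀ x : V ⧸ U, p ^ m • x = 0 := by
    intro x
    obtain ⟨x, rfl⟩ := U.mkQ_surjective x
    rw [← map_nsmul]
    exact (Submodule.Quotient.mk_eq_zero _).2 (hU x)
  have hz : U.mkQ v = 0 := by
    apply aux_ff_inj _ _ hle (hff m hm hle)
    · refine (Module.isTorsionBySet_span_singleton_iff _).2 fun x => ?_
      rw [← Nat.cast_pow, Nat.cast_smul_eq_nsmul, hX]
    · have hr : ∀ r : B ⊗[A] (V ⧸ U), p ^ m • r = 0 := by
        intro r
        induction r with
        | zero => simp
        | add x y hx hy => rw [smul_add, hx, hy, add_zero]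
        | tmul b x => rw [← TensorProduct.tmul_smul, hX, TensorProduct.tmul_zero]
      have := congrArg (U.mkQ.baseChange B) h
      rw [map_add, map_nsmul, hr, add_zero, LinearMap.baseChange_tmul] at this
      rw [this]
      obtain ⟨z, rfl⟩ := hw
      rw [← LinearMap.comp_apply, ← LinearMap.baseChange_comp]
      have : U.mkQ ∘ₗ W.subtype = 0 := by
        ext x
        exact (Submodule.Quotient.mk_eq_zero _).2 (Submodule.mem_sup_left x.2)
      rw [this]; simp
  have hvU : v ∈ U := (Submodule.Quotient.mk_eq_zero _).1 hz
  obtain ⟨w, hw, z, hz', rfl⟩ := Submodule.mem_sup.1 hvU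
  obtain ⟨y, rfl⟩ := (aux_mem_pow_smul_top p m _).1 hz'
  exact ⟨w, hw, y, rfl⟩

theorem aux_section {B F N : Type*} [CommRing B] [AddCommGroup F] [Module B F] [AddCommGroup N]
    [Module B N] [Module.Finite B F] [Module.Free B F] (p : ℕ)
    (hF : ∀ (m : ℕ) (x : F), p ^ m • x = 0 → x = 0)
    (π : F →ₗ[B] N) (hπ : Function.Surjective π)
    (hproj : Module.Projective (Localization (Submonoid.powers (p : B)))
      (LocalizedModule (Submonoid.powers (p : B)) N)) :
    ∃ (c : ℕ) (s : F →ₗ[B] F), (∀ x, π (s x) = p ^ c • π x) ∧ ∀ x, π x = 0 → s x = 0 := by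
  let S := Submonoid.powers (p : B)
  let jF := LocalizedModule.mkLinearMap S F
  let jN := LocalizedModule.mkLinearMap S N
  have hpi : Function.Surjective (LocalizedModule.map S π) := by
    exact LocalizedModule.map_surjective S π hπ
  obtain ⟨t, ht⟩ := Module.projective_lifting_property (LocalizedModule.map S π) LinearMap.id hpi
  let b := Module.Free.chooseBasis B F
  obtain ⟨⟨_, c, rfl⟩, hc⟩ := IsLocalizedModule.exist_integer_multiples_of_finite S jF
    (fun i => t (jN (π (b i))))
  choose g hg using hc
  let s : F →ₗ[B] F := b.constr B g
  have hs : ∀ x, jF (s x) = p ^ c • t (jN (π x)) := by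
    have : jF ∘ₗ s = p ^ c • ((t.restrictScalars B) ∘ₗ jN ∘ₗ π) := by
      apply b.ext
      intro i
      simp only [LinearMap.comp_apply, s, Module.Basis.constr_basis]
      rw [hg, ← Nat.cast_smul_eq_nsmul B, Nat.cast_pow]
      rfl
    intro x
    exact congrArg (fun f => f x) this
  have hFinj : ∀ x, jF x = 0 → x = 0 := by
    intro x hx
    obtain ⟨⟨_, m, rfl⟩, hm⟩ := (IsLocalizedModule.eq_zero_iff S jF).1 hx
    apply hF m x
    rw [← Nat.cast_smul_eq_nsmul B, Nat.cast_pow]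
    exact hm
  have hker : ∀ x, π x = 0 → s x = 0 := by
    intro x hx
    apply hFinj
    rw [hs, hx]; simp
  have hN : ∀ x, jN (π (s x)) = jN (p ^ c • π x) := by
    intro x
    have h1 : jN (π (s x)) = LocalizedModule.map S π (jF (s x)) := by
      simp [jN, jF, LocalizedModule.mkLinearMap_apply, LocalizedModule.map_mk]
    rw [h1, hs, map_nsmul, map_nsmul]
    congr 1
    exact congrArg (fun f => f (jN (π x))) ht
  have hN2 : ∀ i, ∃ m : ℕ, p ^ m • (π (s (b i)) - p ^ c • π (b i)) = 0 := by
    intro i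
    have : jN (π (s (b i)) - p ^ c • π (b i)) = 0 := by rw [map_sub, hN, sub_self]
    obtain ⟨⟨_, m, rfl⟩, hm⟩ := (IsLocalizedModule.eq_zero_iff S jN).1 this
    refine ⟨m, ?_⟩
    rw [← Nat.cast_smul_eq_nsmul B, Nat.cast_pow]
    exact hm
  choose m hm using hN2
  let d := ∑ i, m i
  have hd : ∀ i, p ^ d • (π (s (b i)) - p ^ c • π (b i)) = 0 := by
    intro i
    have hle : m i ≤ d := Finset.single_le_sum (f := m) (fun _ _ => Nat.zero_le _) (Finset.mem_univ i)
    obtain ⟨k, hk⟩ := Nat.exists_eq_add_of_le' hle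
    rw [hk, pow_add, mul_smul, hm, smul_zero]
  refine ⟨d + c, p ^ d • s, ?_, fun x hx => by simp [hker x hx]⟩
  have : π ∘ₗ (p ^ d • s) = p ^ (d + c) • π := by
    apply b.ext
    intro i
    have := hd i
    rw [smul_sub, sub_eq_zero] at this
    simp only [LinearMap.comp_apply, LinearMap.smul_apply, map_nsmul]
    rw [this, pow_add, mul_smul]
  intro x
  exact congrArg (fun f => f x) this

theorem aux_final {A V M : Type*} [CommRing A] [AddCommGroup V] [Module A V] [AddCommGroup M]
    [Module A M] [Module.Projective A V] (p : ℕ)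
    (π : V →ₗ[A] M) (d : ℕ) (s : M →ₗ[A] V) (hs : ∀ x, π (s x) = p ^ d • x) :
    Module.Projective (Localization (Submonoid.powers (p : A)))
      (LocalizedModule (Submonoid.powers (p : A)) M) := by
  let S := Submonoid.powers (p : A)
  let u : Localization S := Localization.mk 1 ⟨(p : A) ^ d, d, rfl⟩
  refine Module.Projective.of_split (u • LocalizedModule.map S s) (LocalizedModule.map S π) ?_
  ext x
  induction x using LocalizedModule.induction_on with
  | h m t =>
    simp only [LinearMap.comp_apply, LinearMap.smul_apply, map_smul, LocalizedModule.map_mk, hs,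
      LinearMap.id_apply, u]
    rw [LocalizedModule.mk_smul_mk, LocalizedModule.mk_eq]
    refine ⟨1, ?_⟩
    simp only [one_smul, mul_smul]
    rw [← Nat.cast_smul_eq_nsmul A, Nat.cast_pow]
    rw [smul_comm]
    rfl

theorem aux_bc_map {A B V V' : Type*} [CommRing A] [CommRing B] [Algebra A B] [AddCommGroup V]
    [Module A V] [AddCommGroup V'] [Module A V'] (T : V →ₗ[A] V') (K : Submodule A V)
    (W : Submodule A V') (h : ∀ x ∈ K, T x ∈ W)
    {u : B ⊗[A] V} (hu : u ∈ K.baseChange B) : T.baseChange B u ∈ W.baseChange B := by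
  rw [Submodule.baseChange_eq_span] at hu
  induction hu using Submodule.span_induction with
  | zero => simp
  | add x y _ _ hx hy => rw [map_add]; exact add_mem hx hy
  | smul a x _ hx => rw [map_smul]; exact Submodule.smul_mem _ _ hx
  | mem x hx =>
    obtain ⟨x, hx, rfl⟩ := hx
    rw [TensorProduct.mk_apply, LinearMap.baseChange_tmul]
    exact Submodule.tmul_mem_baseChange_of_mem _ (h x hx)

theorem aux_bc_fg {A B V : Type*} [CommRing A] [CommRing B] [Algebra A B] [AddCommGroup V]
    [Module A V] (K : Submodule A V) {u : B ⊗[A] V} (hu : u ∈ K.baseChange B) :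
    ∃ K0 : Submodule A V, K0 ≤ K ∧ K0.FG ∧ u ∈ K0.baseChange B := by
  rw [Submodule.baseChange_eq_span] at hu
  induction hu using Submodule.span_induction with
  | zero => exact ⟨⊥, bot_le, Submodule.fg_bot, zero_mem _⟩
  | add x y _ _ hx hy =>
    obtain ⟨K1, h1, f1, m1⟩ := hx
    obtain ⟨K2, h2, f2, m2⟩ := hy
    exact ⟨K1 ⊔ K2, sup_le h1 h2, f1.sup f2,
      add_mem (Submodule.baseChange_mono _ le_sup_left m1)
        (Submodule.baseChange_mono _ le_sup_right m2)⟩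
  | smul a x _ hx =>
    obtain ⟨K1, h1, f1, m1⟩ := hx
    exact ⟨K1, h1, f1, Submodule.smul_mem _ _ m1⟩
  | mem x hx =>
    obtain ⟨x, hx, rfl⟩ := hx
    exact ⟨Submodule.span A {x}, by simpa using hx, Submodule.fg_span_singleton _,
      Submodule.tmul_mem_baseChange_of_mem _ (Submodule.mem_span_singleton_self x)⟩

theorem aux_e_sum {A B ι : Type*} [Fintype ι] [DecidableEq ι] [CommRing A] [CommRing B]
    [Algebra A B] {Y : Type*} [AddCommGroup Y] [Module B Y]
    (e : B ⊗[A] (ι → A) →ₗ[B] Y) (x : ι → A) :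
    e (1 ⊗ₜ x) = ∑ i, algebraMap A B (x i) • e (1 ⊗ₜ Pi.single i 1) := by
  conv_lhs => rw [pi_eq_sum_univ' x, TensorProduct.tmul_sum, map_sum]
  refine Finset.sum_congr rfl fun i _ => ?_
  rw [TensorProduct.tmul_smul, ← algebraMap_smul B, map_smul]

theorem aux_step1 {A B ι : Type*} [Fintype ι] [DecidableEq ι] [CommRing A] [CommRing B]
    [Algebra A B] {p : ℕ} (hff : CompFF A B p)
    (hA : IsAdicComplete (Ideal.span {(p : A)}) A)
    (hB : ∀ (m : ℕ) (x : B ⊗[A] (ι → A)), p ^ m • x = 0 → x = 0)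
    (K : Submodule A (ι → A)) (c : ℕ) (hK : ∀ (m : ℕ) y, p ^ m • y ∈ K → p ^ c • y ∈ K)
    (e : B ⊗[A] (ι → A) →ₗ[B] B ⊗[A] (ι → A))
    (E1 : ∀ u ∈ K.baseChange B, e u = p ^ c • u)
    (E2 : ∀ (m : ℕ) b, ∃ u ∈ K.baseChange B, ∃ r, e b = u + p ^ m • r)
    (E3 : ∀ b, e (e b) = p ^ c • e b) :
    ∃ N ≤ K, N.FG ∧ ∀ x ∈ K, p ^ c • x ∈ N := by
  choose u hu r hr using fun i : ι => E2 (2 * c + 1) (1 ⊗ₜ Pi.single i 1)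
  have hr2 : ∀ i, e (r i) = p ^ c • r i := by
    intro i
    rw [← sub_eq_zero]
    apply hB (2 * c + 1)
    have h1 : p ^ (2 * c + 1) • r i = e (1 ⊗ₜ Pi.single i 1) - u i := by rw [hr]; abel
    rw [smul_sub, ← map_nsmul, smul_comm, h1, map_sub, E3, E1 _ (hu i)]
    rw [smul_sub, sub_self]
  choose u' hu' r' hr' using fun i : ι => E2 (2 * c + 1) (r i)
  choose K1 hK1 fg1 m1 using fun i => aux_bc_fg K (hu i)
  let K0 := ⨆ i, K1 i
  have hK0 : K0 ≤ K := iSup_le hK1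
  have fg0 : K0.FG := Submodule.fg_iSup _ fg1
  have m0 : ∀ i, u i ∈ K0.baseChange B := fun i =>
    Submodule.baseChange_mono _ (le_iSup K1 i) (m1 i)
  let T : (ι → A) →ₗ[A] (ι → A) := p ^ (c + 1) • LinearMap.id
  let W := K0 ⊔ K.map T
  have key : ∀ x ∈ K, ∃ k0 ∈ K0, ∃ k ∈ K, p ^ c • x = k0 + p ^ (c + 1) • k := by
    intro x hx
    have h1 : (1 : B) ⊗ₜ[A] (p ^ c • x) =
        (∑ i, algebraMap A B (x i) • (u i + p ^ (c + 1) • u' i)) +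
          p ^ (2 * c + 1) • (p ^ (c + 1) • ∑ i, algebraMap A B (x i) • r' i) := by
      rw [TensorProduct.tmul_smul, ← E1 _ (Submodule.tmul_mem_baseChange_of_mem _ hx), aux_e_sum,
        Finset.smul_sum, Finset.smul_sum, ← Finset.sum_add_distrib]
      refine Finset.sum_congr rfl fun i _ => ?_
      have h2 : p ^ (2 * c + 1) • r i = p ^ (c + 1) • (u' i + p ^ (2 * c + 1) • r' i) := by
        rw [← hr', hr2, ← mul_smul, ← pow_add]
        congr 2; ring
      rw [hr, h2]
      module
    obtain ⟨w, hw, y, hy⟩ := aux_descent hff W (2 * c + 1) _ _ (by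
      refine Submodule.sum_mem _ fun i _ => Submodule.smul_mem _ _ (add_mem ?_ ?_)
      · exact Submodule.baseChange_mono _ le_sup_left (m0 i)
      · have : p ^ (c + 1) • u' i = T.baseChange B (u' i) := by
          simp only [T]
          induction u' i with
          | zero => simp
          | add x y hx hy => rw [smul_add, hx, hy, map_add]
          | tmul b x => 
            rw [LinearMap.baseChange_tmul, LinearMap.smul_apply, TensorProduct.tmul_smul]
            rfl
        rw [this]
        exact aux_bc_map T K W (fun x hx => Submodule.mem_sup_right ⟨x, hx, rfl⟩) (hu' i)) _ h1
    obtain ⟨k0, hk0, k, ⟨k, hk, rfl⟩, rfl⟩ := Submodule.mem_sup.1 hw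
    have hy2 : p ^ (2 * c + 1) • y ∈ K := by
      have : p ^ (2 * c + 1) • y = p ^ c • x - (k0 + p ^ (c + 1) • k) := by
        rw [hy]; simp only [T, LinearMap.smul_apply, LinearMap.id_apply]; abel
      rw [this]
      exact sub_mem (nsmul_mem hx _) (add_mem (hK0 hk0) (nsmul_mem hk _))
    refine ⟨k0, hk0, k + p ^ c • y, add_mem hk (hK _ _ hy2), ?_⟩
    rw [hy]; simp only [T, LinearMap.smul_apply, LinearMap.id_apply]
    module
  let S : (ι → A) →ₗ[A] (ι → A) := p ^ c • LinearMap.id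
  have hSx : ∀ x, S x = p ^ c • x := fun x => rfl
  let N := K0 ⊔ K.map S
  refine ⟨N, ?_, ?_, fun x hx => Submodule.mem_sup_right ⟨x, hx, rfl⟩⟩
  · refine sup_le hK0 ?_
    rintro _ ⟨x, hx, rfl⟩
    exact nsmul_mem hx _
  · obtain ⟨n, g, hg⟩ := (Submodule.fg_iff_exists_fin_linearMap _ _).1 fg0
    have hgN : ∀ a, g a ∈ N := fun a => Submodule.mem_sup_left (hg ▸ LinearMap.mem_range_self g a)
    let f : (Fin n → A) →ₗ[A] N := g.codRestrict N hgN
    have hV := aux_pi_haus (ι := ι) p hA.toIsHausdorff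
    have hP : IsPrecomplete (Ideal.span {(p : A)}) (Fin n → A) := aux_pi_prec p hA.toIsPrecomplete
    have hH : IsHausdorff (Ideal.span {(p : A)}) N := by
      refine ⟨fun x hx => Subtype.ext (aux_haus p hV _ fun m => ?_)⟩
      have := hx m
      rw [SModEq.zero, aux_mem_pow_smul_top] at this
      obtain ⟨y, rfl⟩ := this
      exact ⟨y, by simp⟩
    have hsurj : Function.Surjective f := by
      apply surjective_of_mkQ_comp_surjective (I := Ideal.span {(p : A)})
      intro z
      obtain ⟨⟨z, hz⟩, rfl⟩ := Submodule.mkQ_surjective _ z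
      obtain ⟨k0, hk0, _, ⟨x, hx, rfl⟩, rfl⟩ := Submodule.mem_sup.1 hz
      obtain ⟨k1, hk1, k, hk, hxk⟩ := key x hx
      have : k0 + k1 ∈ LinearMap.range g := hg ▸ add_mem hk0 hk1
      obtain ⟨a, ha⟩ := this
      refine ⟨a, ?_⟩
      rw [LinearMap.comp_apply, ← sub_eq_zero, ← map_sub]
      refine (Submodule.Quotient.mk_eq_zero _).2 ?_
      rw [← pow_one (Ideal.span {(p : A)}), aux_mem_pow_smul_top]
      refine ⟨⟨-(p ^ c • k), neg_mem (Submodule.mem_sup_right ⟨k, hk, rfl⟩)⟩, Subtype.ext ?_⟩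
      simp only [f, AddSubgroupClass.coe_sub, LinearMap.codRestrict_apply, ha, hSx, hxk,
        Submodule.coe_smul_of_tower]
      module
    have : Module.Finite A N := Module.Finite.of_surjective f hsurj
    exact Module.Finite.iff_fg.1 this

theorem aux_step2 {A B ι : Type*} [Fintype ι] [DecidableEq ι] [CommRing A] [CommRing B]
    [Algebra A B] {p : ℕ} (hff : CompFF A B p) (hAtf : (p : A) ∈ nonZeroDivisors A)
    (hA : IsAdicComplete (Ideal.span {(p : A)}) A)
    (K : Submodule A (ι → A)) (c : ℕ) (hK : ∀ (m : ℕ) y, p ^ m • y ∈ K → p ^ c • y ∈ K)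
    (e : B ⊗[A] (ι → A) →ₗ[B] B ⊗[A] (ι → A))
    (E1 : ∀ u ∈ K.baseChange B, e u = p ^ c • u)
    (E2 : ∀ (m : ℕ) b, ∃ u ∈ K.baseChange B, ∃ r, e b = u + p ^ m • r)
    (N : Submodule A (ι → A)) (hNK : N ≤ K) (hN : N.FG) (hKN : ∀ x ∈ K, p ^ c • x ∈ N) :
    ∃ (d : ℕ) (h : (ι → A) →ₗ[A] (ι → A)), (∀ x ∈ K, h x = 0) ∧ ∀ x, p ^ d • x - h x ∈ K := by
  obtain ⟨L, x, hx⟩ := Submodule.fg_iff_exists_fin_generating_family.1 hN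
  have hxN : ∀ l, x l ∈ N := fun l => hx ▸ Submodule.subset_span ⟨l, rfl⟩
  let T : ι → (ι → A) →ₗ[A] (Fin L → (ι → A)) := fun i =>
    LinearMap.pi fun l => x l i • LinearMap.id
  let Φ : (ι → K) →ₗ[A] (Fin L → (ι → A)) :=
    ∑ i, T i ∘ₗ K.subtype ∘ₗ LinearMap.proj i
  have hTW : ∀ i, ∀ y ∈ K, T i y ∈ LinearMap.range Φ := by
    intro i y hy
    refine ⟨Pi.single i ⟨y, hy⟩, ?_⟩
    simp only [Φ, LinearMap.sum_apply, LinearMap.comp_apply, LinearMap.proj_apply]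
    rw [Finset.sum_eq_single i]
    · simp
    · intro j _ hj
      simp [Pi.single_eq_of_ne hj]
    · simp
  choose u hu r hr using fun i : ι => E2 (3 * c + 1) (1 ⊗ₜ Pi.single i 1)
  have h1 : (1 : B) ⊗ₜ[A] (p ^ c • x) = ∑ i, (T i).baseChange B (e (1 ⊗ₜ Pi.single i 1)) := by
    apply (TensorProduct.piRight A B B (fun _ : Fin L => (ι → A))).injective
    funext l
    have hproj : ∀ z, TensorProduct.piRight A B B (fun _ : Fin L => (ι → A)) z l =
        (LinearMap.proj (R := A) (φ := fun _ : Fin L => (ι → A)) l).baseChange B z := by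
      intro z
      induction z with
      | zero => simp
      | add a b ha hb => rw [map_add, map_add, Pi.add_apply, ha, hb]
      | tmul b y => simp
    rw [hproj, hproj, map_sum, LinearMap.baseChange_tmul, LinearMap.proj_apply, Pi.smul_apply,
      TensorProduct.tmul_smul,
      ← E1 _ (Submodule.tmul_mem_baseChange_of_mem _ (hNK (hxN l))), aux_e_sum]
    refine Finset.sum_congr rfl fun i _ => ?_
    generalize e (1 ⊗ₜ Pi.single i 1) = z
    induction z with
    | zero => simp
    | add a b ha hb => rw [smul_add, ha, hb, map_add, map_add]
    | tmul b y =>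
      simp only [LinearMap.baseChange_tmul, LinearMap.proj_apply, T, LinearMap.pi_apply,
        LinearMap.smul_apply, LinearMap.id_apply, TensorProduct.tmul_smul, algebraMap_smul]
  have h2 : (1 : B) ⊗ₜ[A] (p ^ c • x) = (∑ i, (T i).baseChange B (u i)) +
      p ^ (3 * c + 1) • ∑ i, (T i).baseChange B (r i) := by
    rw [h1, Finset.smul_sum, ← Finset.sum_add_distrib]
    refine Finset.sum_congr rfl fun i _ => ?_
    rw [hr, map_add, map_nsmul]
  obtain ⟨_, ⟨κ, rfl⟩, y, hy⟩ := aux_descent hff (LinearMap.range Φ) (3 * c + 1) _ _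
    (Submodule.sum_mem _ fun i _ => aux_bc_map (T i) K _ (hTW i) (hu i)) _ h2
  let φ : (ι → A) →ₗ[A] (ι → A) := Fintype.linearCombination A (fun i => (κ i : ι → A))
  have hφ : ∀ v, φ v = ∑ i, v i • (κ i : ι → A) := fun v => rfl
  have hφK : ∀ v, φ v ∈ K := fun v => by
    rw [hφ]; exact Submodule.sum_mem _ fun i _ => Submodule.smul_mem _ _ (κ i).2
  have hyl : ∀ l, p ^ c • x l = φ (x l) + p ^ (3 * c + 1) • y l := by
    intro l
    have := congrFun hy l
    rw [Pi.smul_apply, Pi.add_apply, Pi.smul_apply] at this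
    rw [this, hφ]
    congr 1
    simp [Φ, T, LinearMap.sum_apply, Finset.sum_apply]
  let f : (ι → A) →ₗ[A] N := (p ^ c • φ).codRestrict N (fun v => hKN _ (hφK v))
  have hf : ∀ v, (f v : ι → A) = p ^ c • φ v := fun v => rfl
  have hz : ∀ v ∈ N, ∃ z : N, p ^ (2 * c) • v = f v + p ^ (2 * c) • p • (z : ι → A) := by
    intro v hv
    rw [← hx] at hv
    induction hv using Submodule.span_induction with
    | zero => exact ⟨0, by simp⟩
    | add a b _ _ ha hb =>
      obtain ⟨za, ha⟩ := ha
      obtain ⟨zb, hb⟩ := hb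
      refine ⟨za + zb, ?_⟩
      rw [smul_add, ha, hb, map_add, Submodule.coe_add, Submodule.coe_add]
      module
    | smul t a _ ha =>
      obtain ⟨za, ha⟩ := ha
      refine ⟨t • za, ?_⟩
      rw [smul_comm, ha, map_smul, Submodule.coe_smul, Submodule.coe_smul]
      module
    | mem v hv =>
      obtain ⟨l, rfl⟩ := hv
      have hyK : p ^ (3 * c + 1) • y l ∈ K := by
        have : p ^ (3 * c + 1) • y l = p ^ c • x l - φ (x l) := by rw [hyl]; abel
        rw [this]
        exact sub_mem (nsmul_mem (hNK (hxN l)) _) (hφK _)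
      refine ⟨⟨_, hKN _ (hK _ _ hyK)⟩, ?_⟩
      have : p ^ (2 * c) • x l = p ^ c • (p ^ c • x l) := by
        rw [← mul_smul, ← pow_add, two_mul]
      rw [this, hyl, hf]
      module
  have hinj : ∀ (m : ℕ) {v w : N}, p ^ m • v = p ^ m • w → v = w := by
    intro m v w h
    refine Subtype.ext (aux_tf hAtf m ?_)
    exact congrArg Subtype.val h
  have hg : ∀ v : N, ∃ g z : N, p ^ (2 * c) • g = f v ∧ v = g + p • z := by
    intro v
    obtain ⟨z, hz⟩ := hz v v.2
    refine ⟨v - p • z, z, Subtype.ext ?_, by abel⟩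
    have : (f v : ι → A) = p ^ (2 * c) • (v : ι → A) - p ^ (2 * c) • p • (z : ι → A) := by
      rw [hz]; abel
    rw [this, smul_sub]
    rfl
  choose g₀ z hg1 hg2 using hg
  let g : N →ₗ[A] N :=
    { toFun := g₀
      map_add' := fun a b => hinj (2 * c) (by
        rw [smul_add, hg1, hg1, hg1, Submodule.coe_add, map_add])
      map_smul' := fun t a => hinj (2 * c) (by
        rw [RingHom.id_apply, smul_comm, hg1, hg1, Submodule.coe_smul, map_smul]) }
  have hgg : ∀ v, g v = g₀ v := fun v => rfl
  have g_inj : Function.Injective g := by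
    rw [← LinearMap.ker_eq_bot, LinearMap.ker_eq_bot']
    have : ∀ m : ℕ, ∀ v : N, g v = 0 → ∃ w : N, v = p ^ m • w := by
      intro m
      induction m with
      | zero => exact fun v _ => ⟨v, by simp⟩
      | succ m ih =>
        intro v hv
        have h3 : v = p • z v := by
          have := hg2 v
          rwa [← hgg, hv, zero_add] at this
        have h4 : g (z v) = 0 := by
          apply hinj 1
          rw [pow_one, ← map_nsmul, ← h3, hv, smul_zero]
        obtain ⟨w, hw⟩ := ih _ h4
        refine ⟨w, ?_⟩
        rw [h3, hw, ← mul_smul, pow_succ']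
    intro v hv
    refine Subtype.ext (aux_haus p (aux_pi_haus (ι := ι) p hA.toIsHausdorff) _ fun m => ?_)
    obtain ⟨w, hw⟩ := this m v hv
    exact ⟨w, congrArg Subtype.val hw⟩
  have g_surj : Function.Surjective g := by
    have : Module.Finite A N := Module.Finite.iff_fg.2 hN
    rw [← LinearMap.range_eq_top, ← top_le_iff]
    refine Submodule.le_of_le_smul_of_le_jacobson_bot (I := Ideal.span {(p : A)})
      Module.Finite.fg_top (IsAdicComplete.le_jacobson_bot _) ?_
    intro v _
    rw [hg2 v]
    refine add_mem (Submodule.mem_sup_left ⟨v, rfl⟩) (Submodule.mem_sup_right ?_)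
    rw [← pow_one (Ideal.span {(p : A)}), aux_mem_pow_smul_top]
    exact ⟨z v, by simp⟩
  let G := LinearEquiv.ofBijective g ⟨g_inj, g_surj⟩
  refine ⟨2 * c, p ^ (2 * c) • LinearMap.id - N.subtype ∘ₗ G.symm.toLinearMap ∘ₗ f, ?_, ?_⟩
  · have hNz : ∀ v : N, G.symm (f v) = p ^ (2 * c) • v := by
      intro v
      rw [LinearEquiv.symm_apply_eq, map_nsmul, ← hg1]
      rfl
    intro v hv
    apply aux_tf hAtf c
    rw [← map_nsmul, smul_zero]
    have := hNz ⟨_, hKN v hv⟩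
    simp only [LinearMap.sub_apply, LinearMap.smul_apply, LinearMap.id_apply,
      LinearMap.comp_apply, LinearEquiv.coe_coe, Submodule.subtype_apply]
    rw [this]
    simp
  · intro v
    have : p ^ (2 * c) • v - (p ^ (2 * c) • LinearMap.id -
        N.subtype ∘ₗ G.symm.toLinearMap ∘ₗ f : (ι → A) →ₗ[A] (ι → A)) v = (G.symm (f v) : ι → A) :=
      sub_sub_cancel _ _
    rw [this]
    exact hNK (G.symm (f v)).2

/-!
Let p be a prime and A → B a homomorphism of commutative rings, both
p-torsion-free and classically p-adically complete, such that the induced map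
A/pⁿA → B/pⁿB is faithfully flat for every n ≥ 1.  Let M be a finitely
generated, classically p-adically complete A-module, and let M_B denote the
p-adic completion of M ⊗_A B (realized as
`AdicCompletion (span {p}) (B ⊗[A] M)`).  If M_B[1/p] is a finite projective
B[1/p]-module, then M[1/p] is a finite projective A[1/p]-module.
-/

theorem finite_projective_invert_p_descends_along_complete_faithfully_flat
    {A B : Type*} [CommRing A] [CommRing B] [Algebra A B] (p : ℕ) (hp : p.Prime)
    (hAtf : (p : A) ∈ nonZeroDivisors A) (hBtf : (p : B) ∈ nonZeroDivisors B)
    (hAcomp : IsAdicComplete (Ideal.span {(p : A)}) A)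
    (hBcomp : IsAdicComplete (Ideal.span {(p : B)}) B)
    (hff : ∀ n : ℕ, 1 ≤ n → RingHomFaithfullyFlat
      (Ideal.quotientMap (Ideal.span {(p : B) ^ n}) (algebraMap A B)
        (show Ideal.span {(p : A) ^ n} ≤
            (Ideal.span {(p : B) ^ n}).comap (algebraMap A B) by
          rw [Ideal.span_le, Set.singleton_subset_iff, SetLike.mem_coe, Ideal.mem_comap,
            map_pow, map_natCast]
          exact Ideal.mem_span_singleton_self _)))
    {M : Type*} [AddCommGroup M] [Module A M]
    (hMfg : Module.Finite A M)
    (hMcomp : IsAdicComplete (Ideal.span {(p : A)}) M)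
    (hBfin : Module.Finite (Localization (Submonoid.powers (p : B)))
      (LocalizedModule (Submonoid.powers (p : B))
        (AdicCompletion (Ideal.span {(p : B)}) (B ⊗[A] M))))
    (hBproj : Module.Projective (Localization (Submonoid.powers (p : B)))
      (LocalizedModule (Submonoid.powers (p : B))
        (AdicCompletion (Ideal.span {(p : B)}) (B ⊗[A] M)))) :
    Module.Finite (Localization (Submonoid.powers (p : A)))
      (LocalizedModule (Submonoid.powers (p : A)) M) ∧
    Module.Projective (Localization (Submonoid.powers (p : A)))
      (LocalizedModule (Submonoid.powers (p : A)) M) := by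
  have hCF : CompFF A B p := fun n hn h => hff n hn
  refine ⟨inferInstance, ?_⟩
  obtain ⟨n, π, hπ⟩ := Module.Finite.exists_fin' A M
  let I := Ideal.span {(p : B)}
  let β := π.baseChange B
  have hβ : Function.Surjective β := LinearMap.lTensor_surjective B hπ
  let E := TensorProduct.piScalarRight A B B (Fin n)
  have hP : IsPrecomplete I (Fin n → B) := aux_pi_prec p hBcomp.toIsPrecomplete
  let Pi0 : B ⊗[A] (Fin n → A) →ₗ[B] AdicCompletion I (B ⊗[A] M) := AdicCompletion.of I _ ∘ₗ β
  have hPi : Function.Surjective Pi0 := by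
    intro y
    obtain ⟨z, rfl⟩ := AdicCompletion.map_surjective I (f := β ∘ₗ E.symm.toLinearMap)
      (hβ.comp E.symm.surjective) y
    obtain ⟨w, rfl⟩ := AdicCompletion.of_surjective I _ z
    exact ⟨E.symm w, by rw [AdicCompletion.map_of]; rfl⟩
  have hPi0 : ∀ b, Pi0 b = 0 → ∀ m : ℕ, ∃ y, β b = p ^ m • y := by
    intro b hb m
    have : AdicCompletion.eval I _ m (Pi0 b) = 0 := by rw [hb, map_zero]
    rw [LinearMap.comp_apply, AdicCompletion.eval_of] at this
    exact (aux_mem_pow_smul_top p m _).1 ((Submodule.Quotient.mk_eq_zero _).1 this)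
  have hF : ∀ (m : ℕ) (x : B ⊗[A] (Fin n → A)), p ^ m • x = 0 → x = 0 := by
    intro m x hx
    apply E.injective
    apply aux_tf hBtf m
    rw [← map_nsmul, hx, map_zero, smul_zero]
  obtain ⟨c, s, hs1, hs2⟩ := aux_section p hF Pi0 hPi hBproj
  let K := LinearMap.ker π
  have hKβ : ∀ u, u ∈ K.baseChange B ↔ β u = 0 := by
    have hex : Function.Exact (K.subtype) π := LinearMap.exact_subtype_ker_map π
    intro u
    exact (lTensor_exact B hex hπ u).symm
  let e : B ⊗[A] (Fin n → A) →ₗ[B] B ⊗[A] (Fin n → A) := p ^ c • LinearMap.id - s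
  have he : ∀ b, e b = p ^ c • b - s b := fun b => rfl
  have hePi : ∀ b, Pi0 (e b) = 0 := fun b => by rw [he, map_sub, map_nsmul, hs1, sub_self]
  have heK : ∀ b, Pi0 b = 0 → e b = p ^ c • b := fun b hb => by rw [he, hs2 b hb, sub_zero]
  have E1 : ∀ u ∈ K.baseChange B, e u = p ^ c • u := fun u hu => heK u (by
    rw [LinearMap.comp_apply, (hKβ u).1 hu, map_zero])
  have E2 : ∀ (m : ℕ) b, ∃ u ∈ K.baseChange B, ∃ r, e b = u + p ^ m • r := by
    intro m b
    obtain ⟨y, hy⟩ := hPi0 _ (hePi b) m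
    obtain ⟨r, rfl⟩ := hβ y
    refine ⟨e b - p ^ m • r, ?_, r, by abel⟩
    rw [hKβ, map_sub, map_nsmul, hy, sub_self]
  have E3 : ∀ b, e (e b) = p ^ c • e b := fun b => heK _ (hePi b)
  have hK : ∀ (m : ℕ) y, p ^ m • y ∈ K → p ^ c • y ∈ K := by
    intro m y hy
    have h1 : s (1 ⊗ₜ y) = 0 := by
      apply hF m
      rw [← map_nsmul]
      apply hs2
      rw [← TensorProduct.tmul_smul, LinearMap.comp_apply,
        (hKβ _).1 (Submodule.tmul_mem_baseChange_of_mem _ hy), map_zero]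
    have h2 : Pi0 (p ^ c • (1 ⊗ₜ y)) = 0 := by
      rw [map_nsmul, ← hs1, h1, map_zero]
    rw [LinearMap.mem_ker]
    refine aux_haus p hMcomp.toIsHausdorff _ fun j => ?_
    obtain ⟨r, hr⟩ := hPi0 _ h2 j
    rw [← TensorProduct.tmul_smul, LinearMap.baseChange_tmul] at hr
    obtain ⟨w, hw, z, hz⟩ := aux_descent hCF (⊥ : Submodule A M) j _ 0 (zero_mem _) r
      (by rw [hr, zero_add])
    rw [(Submodule.mem_bot A).1 hw, zero_add] at hz
    exact ⟨z, hz⟩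
  obtain ⟨N, hNK, hN, hKN⟩ := aux_step1 hCF hAcomp hF K c hK e E1 E2 E3
  obtain ⟨d, h, hh1, hh2⟩ := aux_step2 hCF hAtf hAcomp K c hK e E1 E2 N hNK hN hKN
  let t : M →ₗ[A] (Fin n → A) :=
    K.liftQ h (fun x hx => hh1 x hx) ∘ₗ (π.quotKerEquivOfSurjective hπ).symm.toLinearMap
  have ht : ∀ x, t (π x) = h x := by
    intro x
    have : (π.quotKerEquivOfSurjective hπ).symm (π x) = K.mkQ x := by
      rw [LinearEquiv.symm_apply_eq]; rfl
    rw [LinearMap.comp_apply, LinearEquiv.coe_coe, this]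
    rfl
  refine aux_final p π d t fun x => ?_
  obtain ⟨x, rfl⟩ := hπ x
  have := hh2 x
  rw [LinearMap.mem_ker, map_sub, sub_eq_zero, map_nsmul] at this
  rw [ht, this]
end
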